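/- For every graph class 𝒢, the class of complements of line graphs of graphs in 𝒢 is (tw,ω)-bounded if and only if it has bounded tree-independence number. -/

import Mathlib

/-!
Both directions use that two edges `e`, `e'` of `G` are adjacent in `G.lineGraphᶜ` iff they are
disjoint, so that the edges at a vertex form an independent set.

If tree-independence numbers are bounded: every edge meets an edge of a maximum clique, so the graph
is covered by `2 * ω` stars and has at most `2 * ω * α` vertices. Apply this to each bag.

If the class is `(tw, ω)`-bounded: two vertices of large degree in `G` give a large induced
`K_{n,n}` in `G.lineGraphᶜ`, which has clique number `2` and large treewidth. Hence at most one
vertex of `G` has large degree. Its star is an independent set `S`, and in the star-shaped tree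
decomposition whose bags are `Sᶜ` and `insert e Sᶜ` all bags have small independence number, because
pairwise intersecting edges all meet a fixed edge, whose ends have small degree.
-/

open SimpleGraph

/-- The independence number of the subgraph of `G` induced by `s`:
the supremum of sizes of independent sets contained in `s`. -/
noncomputable def setIndepNum {V : Type*} (G : SimpleGraph V) (s : Set V) : ℕ :=
  sSup {n | ∃ t : Finset V, ↑t ⊆ s ∧ (∀ u ∈ t, ∀ v ∈ t, u ≠ v → ¬ G.Adj u v) ∧ t.card = n}

/-- A tree decomposition of a graph `G`. -/
structure TreeDecomp {V : Type*} (G : SimpleGraph V) where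
  ι : Type
  T : SimpleGraph ι
  tree : T.IsTree
  bag : ι → Set V
  bag_vert : ∀ v : V, ∃ i, v ∈ bag i
  bag_edge : ∀ u v : V, G.Adj u v → ∃ i, u ∈ bag i ∧ v ∈ bag i
  bag_conn : ∀ v : V, (T.induce {i | v ∈ bag i}).Connected

/-- The tree-independence number of `G`: the least `n` such that `G` has a tree
decomposition all of whose bags induce subgraphs with independence number at most `n`. -/
noncomputable def treeIndepNum {V : Type*} (G : SimpleGraph V) : ℕ :=
  sInf {n | ∃ D : TreeDecomp G, ∀ i, setIndepNum G (D.bag i) ≤ n}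

/-- The treewidth of `G`: the least `n` such that `G` has a tree decomposition
all of whose bags have at most `n + 1` vertices. -/
noncomputable def treewidth {V : Type*} (G : SimpleGraph V) : ℕ :=
  sInf {n | ∃ D : TreeDecomp G, ∀ i, (D.bag i).ncard ≤ n + 1}

/-- A finite graph, bundled. -/
structure FinGraph : Type 1 where
  V : Type
  finite : Finite V
  G : SimpleGraph V

/-- A class of (finite) graphs is `(tw, ω)`-bounded if there is a function `f` such that every
induced subgraph `G'` of a graph in the class satisfies `tw(G') ≤ f(ω(G'))`. -/
def TwOmegaBounded (C : Set FinGraph) : Prop :=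
  ∃ f : ℕ → ℕ, ∀ A ∈ C, ∀ s : Set A.V,
    treewidth (A.G.induce s) ≤ f ((A.G.induce s).cliqueNum)

/-- A class of graphs has bounded tree-independence number. -/
def BddTreeIndep (C : Set FinGraph) : Prop :=
  ∃ c : ℕ, ∀ A ∈ C, treeIndepNum A.G ≤ c

/-- A graph class is hereditary if it contains every graph isomorphic to an induced
subgraph of one of its members. -/
def Hereditary (C : Set FinGraph) : Prop :=
  ∀ A ∈ C, ∀ B : FinGraph, Nonempty (B.G ↪g A.G) → B ∈ C

/-- `G` is a clique partition graph (disjoint union of complete graphs): there is a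
partition of the vertices (given by the fibers of some map) such that two distinct
vertices are adjacent iff they lie in the same part. -/
def IsCliquePartitionGraph {V : Type*} (G : SimpleGraph V) : Prop :=
  ∃ (ι : Type) (f : V → ι), ∀ u v : V, u ≠ v → (G.Adj u v ↔ f u = f v)

/-- The class of complements of line graphs of graphs in `C` (as abstract graphs,
i.e. up to isomorphism). -/
def coLineClass (C : Set FinGraph) : Set FinGraph :=
  {B : FinGraph | ∃ A ∈ C, Nonempty (B.G ≃g (A.G.lineGraph)ᶜ)}

open Finset

section Subtrees

variable {ι α : Type*} {T : SimpleGraph ι}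

theorem reachable_deleteEdges_of_preconnected_induce {C : Set ι} (hC : (T.induce C).Preconnected)
    {e : Sym2 ι} (he : e ∉ C.sym2) {c d : ι} (hc : c ∈ C) (hd : d ∈ C) :
    (T.deleteEdges {e}).Reachable c d := by
  let toDeleteEdges : T.induce C →g T.deleteEdges {e} :=
    { toFun := Subtype.val
      map_rel' := fun {a b} hab => deleteEdges_adj.2
        ⟨hab, fun h => he (h ▸ Set.mk_mem_sym2_iff.2 ⟨a.2, b.2⟩)⟩ }
  exact (hC ⟨c, hc⟩ ⟨d, hd⟩).map toDeleteEdges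

theorem exists_boundary_edge_of_isPath {S : Set ι} {s r : ι} {p : T.Walk s r} (hp : p.IsPath)
    (hs : s ∈ S) (hr : r ∉ S) :
    ∃ x ∈ S, ∃ y ∉ S, T.Adj x y ∧ (T.deleteEdges {s(x, y)}).Reachable y r := by
  induction p with
  | nil => exact absurd hs hr
  | @cons a b _ hab q ih =>
    rw [Walk.cons_isPath_iff] at hp
    by_cases hb : b ∈ S
    · exact ih hp.1 hb hr
    · exact ⟨a, hs, b, hb, hab, reachable_deleteEdges_iff_exists_walk.2
        ⟨q, fun he => hp.2 (q.fst_mem_support_of_mem_edges he)⟩⟩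

/- The edge `xy` leads from `S` towards `R`; deleting it separates `x` from `R`. -/
theorem exists_boundary_edge_forall_subtree (hT : T.IsTree) {S R : Set ι} (hS : S.Nonempty)
    (hR : (T.induce R).Connected) (hSR : Disjoint S R) :
    ∃ x ∈ S, ∃ y ∉ S, ∀ C : Set ι, (T.induce C).Preconnected → x ∈ C → (C ∩ R).Nonempty →
      y ∈ C := by
  obtain ⟨s, hs⟩ := hS
  obtain ⟨r, hr⟩ := hR.nonempty
  obtain ⟨p, hp⟩ := hT.connected.preconnected.exists_isPath s r
  obtain ⟨x, hx, y, hy, hxy, hyr⟩ :=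
    exists_boundary_edge_of_isPath hp hs (Set.disjoint_right.1 hSR hr)
  refine ⟨x, hx, y, hy, fun C hC hxC ⟨d, hdC, hdR⟩ => ?_⟩
  by_contra hyC
  have hxd : (T.deleteEdges {s(x, y)}).Reachable x d :=
    reachable_deleteEdges_of_preconnected_induce hC
      (fun h => hyC (Set.mk_mem_sym2_iff.1 h).2) hxC hdC
  have hdr : (T.deleteEdges {s(x, y)}).Reachable d r :=
    reachable_deleteEdges_of_preconnected_induce hR.preconnected
      (fun h => Set.disjoint_left.1 hSR hx (Set.mk_mem_sym2_iff.1 h).1) hdR hr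
  exact isBridge_iff.1 (isAcyclic_iff_forall_adj_isBridge.1 hT.isAcyclic hxy)
    ((hxd.trans hdr).trans hyr.symm)

theorem helly_subtrees (hT : T.IsTree) {s : Finset α} {C : α → Set ι}
    (hC : ∀ a ∈ s, (T.induce (C a)).Connected)
    (hinter : (s : Set α).Pairwise fun a b => (C a ∩ C b).Nonempty) :
    (⋂ a ∈ s, C a).Nonempty := by
  classical
  induction s using Finset.induction_on with
  | empty =>
    have := hT.connected.nonempty
    simp [Set.univ_nonempty]
  | insert r s hrs ih =>
    rw [forall_mem_insert] at hC
    rw [coe_insert, Set.pairwise_insert_of_notMem (mod_cast hrs)] at hinter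
    rw [set_biInter_insert, Set.inter_comm, ← Set.not_disjoint_iff_nonempty_inter]
    intro hdisj
    obtain ⟨x, hx, y, hy, hsep⟩ :=
      exists_boundary_edge_forall_subtree hT (ih hC.2 hinter.1) hC.1 hdisj
    rw [Set.mem_iInter₂] at hx hy
    exact hy fun a ha => hsep _ (hC.2 a ha).preconnected (hx a ha) (hinter.2 a ha).2

end Subtrees

namespace TreeDecomp

variable {V W : Type*} {G : SimpleGraph V} {H : SimpleGraph W}

/-- The tree decomposition with a single bag. -/
instance : Inhabited (TreeDecomp G) where
  default :=
    { ι := Unit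
      T := ⊥
      tree := .of_subsingleton
      bag := fun _ => Set.univ
      bag_vert := fun _ => ⟨(), trivial⟩
      bag_edge := fun _ _ _ => ⟨(), trivial, trivial⟩
      bag_conn := fun _ => (induceUnivIso _).connected_iff.2 IsTree.of_subsingleton.connected }

/-- The pullback of a tree decomposition along a graph homomorphism, on the same tree. -/
def comap (D : TreeDecomp H) (f : G →g H) : TreeDecomp G where
  ι := D.ι
  T := D.T
  tree := D.tree
  bag i := f ⁻¹' D.bag i
  bag_vert v := D.bag_vert (f v)
  bag_edge u v huv := D.bag_edge (f u) (f v) (f.map_adj huv)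
  bag_conn v := D.bag_conn (f v)

/-- The tree decomposition attached to an independent set `S`: the tree is a star with centre
`none`, whose bag is `Sᶜ`, and the leaf `some v` has bag `insert v Sᶜ`. There is a leaf for every
vertex, not just for those of `S`. -/
def star {V : Type} {G : SimpleGraph V} {S : Set V} (hS : G.IsIndepSet S) : TreeDecomp G where
  ι := Option V
  T := starGraph none
  tree := isTree_starGraph none
  bag i := i.elim Sᶜ (insert · Sᶜ)
  bag_vert v := ⟨some v, Set.mem_insert v _⟩
  bag_edge u v huv := by
    by_cases hu : u ∈ S
    · exact ⟨some u, Set.mem_insert u _, Or.inr fun hv => hS hu hv huv.ne huv⟩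
    · exact ⟨some v, Or.inr hu, Set.mem_insert v _⟩
  bag_conn v := by
    by_cases hv : v ∈ S
    · have hnodes : {i : Option V | v ∈ i.elim Sᶜ (insert · Sᶜ)} = {some v} := by
        ext (_ | w) <;> simp [hv, eq_comm]
      rw [hnodes]
      exact IsTree.of_subsingleton.connected
    · have hnodes : {i : Option V | v ∈ i.elim Sᶜ (insert · Sᶜ)} = Set.univ := by
        ext (_ | w) <;> simp [hv]
      rw [hnodes]
      exact (induceUnivIso _).connected_iff.2 (connected_starGraph none)

theorem exists_subset_bag_of_isCompleteBetween (D : TreeDecomp G) {A B : Finset V}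
    (hAB : G.IsCompleteBetween A B) : ∃ i, ↑A ⊆ D.bag i ∨ ↑B ⊆ D.bag i := by
  by_cases hA : (A : Set V).Pairwise fun a a' =>
      ({i | a ∈ D.bag i} ∩ {i | a' ∈ D.bag i}).Nonempty
  · obtain ⟨i, hi⟩ := helly_subtrees D.tree (fun a _ => D.bag_conn a) hA
    exact ⟨i, Or.inl (Set.mem_iInter₂.1 hi)⟩
  · simp only [Set.Pairwise, not_forall, Set.not_nonempty_iff_eq_empty] at hA
    obtain ⟨a, ha, a', ha', -, hdisj⟩ := hA
    obtain ⟨x, hx, y, hy, hsep⟩ := exists_boundary_edge_forall_subtree D.tree (D.bag_vert a)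
      (D.bag_conn a') (Set.disjoint_iff_inter_eq_empty.2 hdisj)
    refine ⟨y, Or.inr fun b hb => ?_⟩
    obtain ⟨i, hai, hbi⟩ := D.bag_edge a b (hAB ha hb)
    obtain ⟨j, haj, hbj⟩ := D.bag_edge a' b (hAB ha' hb)
    have hconn := induce_union_connected (D.bag_conn a).preconnected (D.bag_conn b).preconnected
      ⟨i, hai, hbi⟩
    exact (hsep _ hconn.preconnected (Or.inl hx) ⟨j, Or.inr hbj, haj⟩).resolve_left hy

end TreeDecomp

section CliqueNum

variable {V W : Type*} {G : SimpleGraph V} {H : SimpleGraph W}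

theorem cliqueNum_le_of_isContained [Finite W] (h : G ⊑ H) : G.cliqueNum ≤ H.cliqueNum := by
  obtain ⟨f⟩ := h
  obtain ⟨K, hK⟩ := G.exists_isNClique_cliqueNum
  have hfK : H.IsNClique G.cliqueNum (K.map f.toEmbedding) :=
    hK.map.mono ((map_le_iff_le_comap f.toEmbedding G H).2 fun _ _ hab => f.toHom.map_adj hab)
  exact hfK.card_eq ▸ hfK.isClique.card_le_cliqueNum

theorem indepNum_le_of_isIndContained [Finite W] (h : G ⊴ H) : G.indepNum ≤ H.indepNum := by
  rw [← cliqueNum_compl, ← cliqueNum_compl]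
  exact cliqueNum_le_of_isContained h.compl.isContained

theorem cliqueNum_completeBipartiteGraph {α β : Type*} [Finite α] [Finite β] [Nonempty α]
    [Nonempty β] :
    (completeBipartiteGraph α β).cliqueNum = 2 := by
  classical
  have hcolorable : (completeBipartiteGraph α β).Colorable 2 :=
    (CompleteBipartiteGraph.bicoloring α β).colorable
  refine le_antisymm ?_ ?_
  · exact mod_cast cliqueNum_le_chromaticNumber.trans hcolorable.chromaticNumber_le
  · obtain ⟨a⟩ := ‹Nonempty α›
    obtain ⟨b⟩ := ‹Nonempty β›
    have hedge : (completeBipartiteGraph α β).IsNClique 2 {.inl a, .inr b} := by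
      simp [isNClique_iff]
    exact hedge.card_eq ▸ hedge.isClique.card_le_cliqueNum

theorem card_le_mul_indepNum_of_colorable [Finite V] {r : ℕ} (h : G.Colorable r) :
    Nat.card V ≤ r * G.indepNum := by
  classical
  have := Fintype.ofFinite V
  obtain ⟨color⟩ := h
  have hclass (c : Fin r) : #{v | color v = c} ≤ G.indepNum := by
    refine IsIndepSet.card_le_indepNum (G := G) ?_
    simpa [Coloring.colorClass] using color.isIndepSet_colorClass c
  simpa [mul_comm] using card_le_mul_card_image_of_maps_to (s := univ) (t := univ) (f := color)
    (fun _ _ => mem_univ _) G.indepNum (fun c _ => hclass c)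

end CliqueNum

section Treewidth

variable {V W : Type*} {G : SimpleGraph V} {H : SimpleGraph W}

variable (G) in
theorem exists_treeDecomp_ncard_bag_le :
    ∃ D : TreeDecomp G, ∀ i, (D.bag i).ncard ≤ treewidth G + 1 :=
  Nat.sInf_mem (s := {n | ∃ D : TreeDecomp G, ∀ i, (D.bag i).ncard ≤ n + 1})
    ⟨(Set.univ : Set V).ncard, default, fun _ => Nat.le_succ _⟩

theorem treewidth_le_of_isContained [Finite W] (h : G ⊑ H) : treewidth G ≤ treewidth H := by
  obtain ⟨f⟩ := h
  obtain ⟨D, hD⟩ := exists_treeDecomp_ncard_bag_le H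
  refine Nat.sInf_le ⟨D.comap f.toHom, fun i => le_trans ?_ (hD i)⟩
  exact Set.ncard_le_ncard_of_injOn f (fun _ hv => hv) f.injective.injOn

theorem le_treewidth_add_one_of_isCompleteBetween [Finite V] {A B : Finset V}
    (hAB : G.IsCompleteBetween A B) : min #A #B ≤ treewidth G + 1 := by
  obtain ⟨D, hD⟩ := exists_treeDecomp_ncard_bag_le G
  obtain ⟨i, h⟩ := D.exists_subset_bag_of_isCompleteBetween hAB
  refine le_trans ?_ (hD i)
  rw [← Set.ncard_coe_finset A, ← Set.ncard_coe_finset B]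
  exact min_le_iff.2 (h.imp Set.ncard_le_ncard Set.ncard_le_ncard)

theorem le_treewidth_completeBipartiteGraph_add_one {α β : Type*} [Fintype α] [Fintype β] :
    min (Fintype.card α) (Fintype.card β) ≤ treewidth (completeBipartiteGraph α β) + 1 := by
  have hcomplete : (completeBipartiteGraph α β).IsCompleteBetween
      (univ.map Function.Embedding.inl : Finset (α ⊕ β))
      (univ.map Function.Embedding.inr : Finset (α ⊕ β)) := by
    simp [IsCompleteBetween]
  simpa using le_treewidth_add_one_of_isCompleteBetween hcomplete

end Treewidth

section TreeIndepNum

variable {V W : Type*} {G : SimpleGraph V} {H : SimpleGraph W}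

theorem setIndepNum_le {s : Set V} {n : ℕ}
    (h : ∀ t : Finset V, ↑t ⊆ s → G.IsIndepSet t → #t ≤ n) : setIndepNum G s ≤ n :=
  csSup_le' fun _ ⟨t, hts, ht, hcard⟩ => hcard ▸ h t hts fun u hu v hv => ht u hu v hv

theorem card_le_setIndepNum [Finite V] {s : Set V} {t : Finset V} (hts : ↑t ⊆ s)
    (ht : G.IsIndepSet t) : #t ≤ setIndepNum G s := by
  have := Fintype.ofFinite V
  refine le_csSup ⟨Fintype.card V, ?_⟩ ⟨t, hts, fun u hu v hv => ht hu hv, rfl⟩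
  rintro _ ⟨t, -, -, rfl⟩
  exact t.card_le_univ

theorem card_le_setIndepNum_of_mapsTo [Finite W] (f : G ↪g H) {s : Set W} {t : Finset V}
    (hts : Set.MapsTo f t s) (ht : G.IsIndepSet t) : #t ≤ setIndepNum H s := by
  rw [← card_map f.toEmbedding]
  refine card_le_setIndepNum ?_ ?_ <;> rw [coe_map]
  · exact hts.image_subset
  · exact f.injective.injOn.pairwise_image.2 (ht.mono' fun _ _ => mt f.map_adj_iff.1)

theorem indepNum_induce_le_setIndepNum [Finite V] (s : Set V) :
    (G.induce s).indepNum ≤ setIndepNum G s := by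
  obtain ⟨t, ht⟩ := (G.induce s).exists_isNIndepSet_indepNum
  exact ht.card_eq ▸
    card_le_setIndepNum_of_mapsTo (Embedding.induce s) (fun v _ => v.2) ht.isIndepSet

theorem setIndepNum_insert_le [Finite V] (v : V) (s : Set V) :
    setIndepNum G (insert v s) ≤ setIndepNum G s + 1 := by
  classical
  refine setIndepNum_le fun t hts ht => ?_
  have herase : #(t.erase v) ≤ setIndepNum G s := by
    refine card_le_setIndepNum ?_ (ht.mono (mod_cast t.erase_subset v))
    rwa [coe_erase, Set.sdiff_singleton_subset_iff]
  have := pred_card_le_card_erase (s := t) (a := v)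
  omega

variable (G) in
theorem exists_treeDecomp_setIndepNum_bag_le :
    ∃ D : TreeDecomp G, ∀ i, setIndepNum G (D.bag i) ≤ treeIndepNum G :=
  Nat.sInf_mem (s := {n | ∃ D : TreeDecomp G, ∀ i, setIndepNum G (D.bag i) ≤ n})
    ⟨setIndepNum G Set.univ, default, fun _ => le_rfl⟩

theorem treeIndepNum_le_of_isIndContained [Finite W] (h : G ⊴ H) :
    treeIndepNum G ≤ treeIndepNum H := by
  obtain ⟨f⟩ := h
  obtain ⟨D, hD⟩ := exists_treeDecomp_setIndepNum_bag_le H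
  refine Nat.sInf_le ⟨D.comap f.toHom, fun i => setIndepNum_le fun t hts ht => ?_⟩
  exact (card_le_setIndepNum_of_mapsTo f hts ht).trans (hD i)

theorem treeIndepNum_le_setIndepNum_compl_add_one {V : Type} [Finite V] {G : SimpleGraph V}
    {S : Set V} (hS : G.IsIndepSet S) : treeIndepNum G ≤ setIndepNum G Sᶜ + 1 := by
  refine Nat.sInf_le ⟨.star hS, ?_⟩
  rintro (_ | v)
  · exact Nat.le_succ _
  · exact setIndepNum_insert_le v Sᶜ

end TreeIndepNum

section NonNeighborsColorable

variable {V W : Type*} {G : SimpleGraph V} {H : SimpleGraph W} {r : ℕ}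

/-- For every vertex `w`, the vertices not adjacent to `w` (among them `w` itself) induce an
`r`-colorable subgraph. Complements of line graphs have this property for `r = 2`, and it suffices
to bound the number of vertices in terms of the clique number and the independence number. -/
def NonNeighborsColorable (G : SimpleGraph V) (r : ℕ) : Prop :=
  ∀ w, (G.induce {x | ¬ G.Adj w x}).Colorable r

theorem NonNeighborsColorable.of_isIndContained (hH : NonNeighborsColorable H r) (h : G ⊴ H) :
    NonNeighborsColorable G r := by
  obtain ⟨f⟩ := h
  intro w
  let toNonNeighbors : G.induce {x | ¬ G.Adj w x} →g H.induce {y | ¬ H.Adj (f w) y} :=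
    { toFun := fun x => ⟨f x, mt f.map_adj_iff.1 x.2⟩
      map_rel' := f.map_adj_iff.2 }
  exact (hH (f w)).of_hom toNonNeighbors

theorem exists_isNClique_cliqueNum_forall_exists_not_adj [Finite V] (G : SimpleGraph V) :
    ∃ K : Finset V, G.IsNClique G.cliqueNum K ∧ ∀ v, ∃ w ∈ K, ¬ G.Adj w v := by
  classical
  obtain ⟨K, hK⟩ := G.exists_isNClique_cliqueNum
  refine ⟨K, hK, fun v => ?_⟩
  by_contra! hadj
  have hinsert : G.IsNClique (G.cliqueNum + 1) (insert v K) :=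
    hK.insert fun w hw => (hadj w hw).symm
  have hle := hinsert.isClique.card_le_cliqueNum
  rw [hinsert.card_eq] at hle
  omega

theorem NonNeighborsColorable.card_le [Finite V] (hG : NonNeighborsColorable G r) :
    Nat.card V ≤ r * G.cliqueNum * G.indepNum := by
  classical
  have := Fintype.ofFinite V
  obtain ⟨K, hK, hnonadj⟩ := exists_isNClique_cliqueNum_forall_exists_not_adj G
  have hcover : univ ⊆ K.biUnion fun w => {v | ¬ G.Adj w v} := fun v _ => by
    simpa using hnonadj v
  have hpart (w : V) : #{v | ¬ G.Adj w v} ≤ r * G.indepNum := by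
    rw [← Set.toFinset_ofPred, ← Set.ncard_eq_toFinset_card']
    exact (card_le_mul_indepNum_of_colorable (hG w)).trans
      (Nat.mul_le_mul_left _ (indepNum_le_of_isIndContained ⟨.induce _⟩))
  calc
    Nat.card V = #(univ : Finset V) := by simp
    _ ≤ #K * (r * G.indepNum) :=
      (card_le_card hcover).trans (card_biUnion_le_card_mul _ _ _ fun w _ => hpart w)
    _ = r * G.cliqueNum * G.indepNum := by rw [hK.card_eq]; ring

theorem NonNeighborsColorable.treewidth_le [Finite V] (hG : NonNeighborsColorable G r) :
    treewidth G ≤ r * G.cliqueNum * treeIndepNum G := by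
  obtain ⟨D, hD⟩ := exists_treeDecomp_setIndepNum_bag_le G
  refine Nat.sInf_le ⟨D, fun i => Nat.le_succ_of_le ?_⟩
  calc
    (D.bag i).ncard
      ≤ r * (G.induce (D.bag i)).cliqueNum * (G.induce (D.bag i)).indepNum :=
        (hG.of_isIndContained ⟨.induce _⟩).card_le
    _ ≤ r * G.cliqueNum * treeIndepNum G := by
        gcongr
        · exact G.cliqueNum_induce_le _
        · exact (indepNum_induce_le_setIndepNum (D.bag i)).trans (hD i)

end NonNeighborsColorable

section ComplLineGraph

variable {V : Type*} {G : SimpleGraph V}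

theorem compl_lineGraph_adj_iff {e e' : G.edgeSet} :
    G.lineGraphᶜ.Adj e e' ↔ ∀ v ∈ (e : Sym2 V), v ∉ (e' : Sym2 V) := by
  simp only [compl_adj, lineGraph_adj_iff_exists, ne_eq, not_and, not_exists]
  refine ⟨fun h => h.2 h.1, fun h => ⟨?_, fun _ => h⟩⟩
  rintro rfl
  exact h _ e.1.out_fst_mem e.1.out_fst_mem

theorem compl_lineGraph_mk_adj_iff {x y : V} (h : s(x, y) ∈ G.edgeSet) {e : G.edgeSet} :
    G.lineGraphᶜ.Adj ⟨s(x, y), h⟩ e ↔ x ∉ (e : Sym2 V) ∧ y ∉ (e : Sym2 V) := by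
  rw [compl_lineGraph_adj_iff]
  simp

theorem nonNeighborsColorable_compl_lineGraph : NonNeighborsColorable G.lineGraphᶜ 2 := by
  classical
  rintro ⟨⟨x, y⟩, hxy⟩
  refine ⟨⟨fun e => if x ∈ (e.1 : Sym2 V) then 0 else 1, fun {e e'} hadj => ?_⟩⟩
  have hmeets (e : G.edgeSet) (he : ¬ G.lineGraphᶜ.Adj ⟨s(x, y), hxy⟩ e) :
      x ∈ (e : Sym2 V) ∨ y ∈ (e : Sym2 V) := by
    rwa [compl_lineGraph_mk_adj_iff hxy, not_and_or, not_not, not_not] at he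
  have hdisj := compl_lineGraph_adj_iff.1 (induce_adj.1 hadj)
  have he := hmeets e e.2
  have he' := hmeets e' e'.2
  have := hdisj x
  have := hdisj y
  split_ifs <;> simp_all

theorem completeBipartiteGraph_isIndContained_compl_lineGraph {u v : V} (huv : u ≠ v) {X Y : Set V}
    (hX : X ⊆ G.neighborSet u \ {v}) (hY : Y ⊆ G.neighborSet v \ {u}) (hXY : Disjoint X Y) :
    completeBipartiteGraph X Y ⊴ G.lineGraphᶜ := by
  let edge : X ⊕ Y → G.edgeSet :=
    Sum.elim (fun x => ⟨s(u, x), (hX x.2).1⟩) (fun y => ⟨s(v, y), (hY y.2).1⟩)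
  have hxv (x : X) : x.1 ≠ v := (hX x.2).2
  have hyu (y : Y) : y.1 ≠ u := (hY y.2).2
  have hxy (x : X) (y : Y) : x.1 ≠ y := hXY.ne_of_mem x.2 y.2
  have hedge : Function.Injective edge := by
    rintro (x | y) (x' | y') h <;> grind
  have hadj (p q : X ⊕ Y) :
      G.lineGraphᶜ.Adj (edge p) (edge q) ↔ (completeBipartiteGraph X Y).Adj p q := by
    rcases p with x | y <;> rcases q with x' | y' <;>
      refine (compl_lineGraph_mk_adj_iff _).trans ?_ <;> grind [completeBipartiteGraph_adj]
  exact ⟨⟨⟨edge, hedge⟩, hadj _ _⟩⟩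

section Degree

variable [Fintype V] [DecidableRel G.Adj]

theorem completeBipartiteGraph_isIndContained_compl_lineGraph_of_degree {u v : V}
    (huv : u ≠ v) {m n : ℕ} (hu : m < G.degree u) (hv : m + n < G.degree v) :
    completeBipartiteGraph (Fin m) (Fin n) ⊴ G.lineGraphᶜ := by
  classical
  have hm : m ≤ #((G.neighborFinset u).erase v) := by
    have := pred_card_le_card_erase (s := G.neighborFinset u) (a := v)
    rw [card_neighborFinset_eq_degree] at this
    omega
  obtain ⟨X, hXu, rfl⟩ := exists_subset_card_eq hm
  have hn : n ≤ #((G.neighborFinset v).erase u \ X) := by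
    have := pred_card_le_card_erase (s := G.neighborFinset v) (a := u)
    have := le_card_sdiff X ((G.neighborFinset v).erase u)
    rw [card_neighborFinset_eq_degree] at *
    omega
  obtain ⟨Y, hYv, rfl⟩ := exists_subset_card_eq hn
  rw [subset_sdiff] at hYv
  have hcontained := completeBipartiteGraph_isIndContained_compl_lineGraph huv (G := G)
    (X := X) (Y := Y) (fun x hx => by simpa [and_comm] using hXu hx)
    (fun y hy => by simpa [and_comm] using hYv.1 hy) (mod_cast hYv.2.symm)
  exact (completeBipartiteGraphCongr X.equivFin Y.equivFin).isIndContained'.trans hcontained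

theorem card_le_two_mul_of_isIndepSet_compl_lineGraph {t : Finset G.edgeSet}
    (ht : G.lineGraphᶜ.IsIndepSet t) {d : ℕ}
    (hd : ∀ e ∈ t, ∀ v ∈ (e : Sym2 V), G.degree v ≤ d) : #t ≤ 2 * d := by
  classical
  obtain rfl | ⟨⟨⟨x, y⟩, hxy⟩, he⟩ := t.eq_empty_or_nonempty
  · simp
  have hcover : t.map (.subtype _) ⊆ G.incidenceFinset x ∪ G.incidenceFinset y := by
    intro e' he'
    obtain ⟨e, het, rfl⟩ := mem_map.1 he'
    have hnonadj : ¬ G.lineGraphᶜ.Adj ⟨s(x, y), hxy⟩ e := fun hadj => ht he het hadj.ne hadj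
    rw [compl_lineGraph_mk_adj_iff, not_and_or, not_not, not_not] at hnonadj
    simpa [incidenceSet] using hnonadj
  calc
    #t = #(t.map (.subtype _)) := (card_map _).symm
    _ ≤ #(G.incidenceFinset x) + #(G.incidenceFinset y) :=
      (card_le_card hcover).trans (card_union_le _ _)
    _ ≤ 2 * d := by
      rw [card_incidenceFinset_eq_degree, card_incidenceFinset_eq_degree, two_mul]
      exact Nat.add_le_add (hd _ he x (Sym2.mem_mk_left x y)) (hd _ he y (Sym2.mem_mk_right x y))

end Degree

theorem treeIndepNum_compl_lineGraph_le_of_degree {V : Type} [Fintype V] {G : SimpleGraph V}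
    [DecidableRel G.Adj] {d : ℕ} (h : {v | d < G.degree v}.Subsingleton) :
    treeIndepNum G.lineGraphᶜ ≤ 2 * d + 1 := by
  set S : Set G.edgeSet := {e | ∃ v ∈ (e : Sym2 V), d < G.degree v}
  have hindep : G.lineGraphᶜ.IsIndepSet S := by
    rintro e ⟨v, hve, hv⟩ e' ⟨v', hve', hv'⟩ - hadj
    exact compl_lineGraph_adj_iff.1 hadj v hve (h hv hv' ▸ hve')
  refine (treeIndepNum_le_setIndepNum_compl_add_one hindep).trans (Nat.add_le_add_right ?_ 1)
  refine setIndepNum_le fun t htS ht => card_le_two_mul_of_isIndepSet_compl_lineGraph ht ?_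
  exact fun e he v hve => not_lt.1 fun hv => htS he ⟨v, hve, hv⟩

theorem treeIndepNum_compl_lineGraph_le_of_not_isIndContained {V : Type} [Finite V]
    {G : SimpleGraph V} {n : ℕ}
    (h : ¬ completeBipartiteGraph (Fin n) (Fin n) ⊴ G.lineGraphᶜ) :
    treeIndepNum G.lineGraphᶜ ≤ 4 * n + 1 := by
  classical
  have := Fintype.ofFinite V
  have hdeg : {v | 2 * n < G.degree v}.Subsingleton := fun u hu v hv => by
    rw [Set.mem_ofPred_eq] at hu hv
    by_contra huv
    exact h (completeBipartiteGraph_isIndContained_compl_lineGraph_of_degree huv (by omega)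
      (by omega))
  exact (treeIndepNum_compl_lineGraph_le_of_degree hdeg).trans_eq (by ring)

end ComplLineGraph

theorem TwOmegaBounded.exists_forall_not_completeBipartiteGraph_isIndContained {C : Set FinGraph}
    (hC : TwOmegaBounded C) :
    ∃ n, ∀ A ∈ C, ¬ completeBipartiteGraph (Fin n) (Fin n) ⊴ A.G := by
  obtain ⟨f, hf⟩ := hC
  refine ⟨f 2 + 2, fun A hA h => ?_⟩
  have := A.finite
  obtain ⟨s, ⟨g⟩⟩ := isIndContained_iff_exists_iso_induce.1 h
  have hω : (A.G.induce s).cliqueNum = 2 := by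
    rw [← cliqueNum_completeBipartiteGraph (α := Fin (f 2 + 2)) (β := Fin (f 2 + 2))]
    exact le_antisymm (cliqueNum_le_of_isContained g.isContained')
      (cliqueNum_le_of_isContained g.isContained)
  have hlower :=
    le_treewidth_completeBipartiteGraph_add_one (α := Fin (f 2 + 2)) (β := Fin (f 2 + 2))
  have hupper := (treewidth_le_of_isContained g.isContained).trans (hω ▸ hf A hA s)
  simp only [Fintype.card_fin, min_self] at hlower
  omega

/-- For every graph class `𝒢`, the class of complements of line graphs of
graphs in `𝒢` is `(tw, ω)`-bounded iff it has bounded tree-independence number. -/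
theorem stmt_1 (𝒢 : Set FinGraph) :
    TwOmegaBounded (coLineClass 𝒢) ↔ BddTreeIndep (coLineClass 𝒢) := by
  constructor
  · intro h
    obtain ⟨n, hn⟩ := h.exists_forall_not_completeBipartiteGraph_isIndContained
    refine ⟨4 * n + 1, fun B hB => ?_⟩
    obtain ⟨A, -, ⟨g⟩⟩ := id hB
    have := A.finite
    have hfree : ¬ completeBipartiteGraph (Fin n) (Fin n) ⊴ A.G.lineGraphᶜ :=
      fun hK => hn B hB (hK.trans g.isIndContained')
    exact (treeIndepNum_le_of_isIndContained g.isIndContained).trans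
      (treeIndepNum_compl_lineGraph_le_of_not_isIndContained hfree)
  · rintro ⟨c, hc⟩
    refine ⟨fun ω => 2 * ω * c, fun B hB s => ?_⟩
    obtain ⟨A, -, ⟨g⟩⟩ := id hB
    have := B.finite
    have hs : B.G.induce s ⊴ B.G := ⟨.induce s⟩
    have hcolorable : NonNeighborsColorable (B.G.induce s) 2 :=
      nonNeighborsColorable_compl_lineGraph.of_isIndContained (hs.trans g.isIndContained)
    exact hcolorable.treewidth_le.trans
      (Nat.mul_le_mul_left _ ((treeIndepNum_le_of_isIndContained hs).trans (hc B hB)))
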